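/- Let f = id ∗ g be the Dirichlet convolution of the identity function with an arithmetic function g satisfying g(n) = O(1) for all n ≥ 1. Then ∑_{n ≤ x} f(⌊x/n⌋)/⌊x/n⌋ = x · ∑_{m ≥ 1} f(m)/(m²(m+1)) + O(x^{1/3} log x) as x → ∞. -/

import Mathlib

open Filter Finset

/-- The additive character `t ↦ exp (2πit)`. -/
noncomputable def expTwoPi (t : ℝ) : ℂ := Complex.exp ((2 * Real.pi * t : ℝ) * Complex.I)

lemma norm_expTwoPi (t : ℝ) : ‖expTwoPi t‖ = 1 := Complex.norm_exp_ofReal_mul_I _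

lemma expTwoPi_add (s t : ℝ) : expTwoPi (s + t) = expTwoPi s * expTwoPi t := by
  rw [expTwoPi, expTwoPi, expTwoPi, ← Complex.exp_add]
  congr 1
  push_cast
  ring

lemma expTwoPi_re (t : ℝ) : (expTwoPi t).re = Real.cos (2 * Real.pi * t) := by
  rw [expTwoPi, Complex.exp_ofReal_mul_I_re]

lemma norm_expTwoPi_sub_one_le (t : ℝ) : ‖expTwoPi t - 1‖ ≤ 2 * Real.pi * |t| := by
  have h := Real.norm_exp_I_mul_ofReal_sub_one_le (x := 2 * Real.pi * t)
  rw [mul_comm Complex.I] at h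
  refine h.trans (le_of_eq ?_)
  rw [Real.norm_eq_abs, abs_mul, abs_of_pos Real.two_pi_pos]

lemma one_sub_expTwoPi_mul {t : ℝ} (ht : Real.sin (Real.pi * t) ≠ 0) :
    (1 - expTwoPi t) *
      (1 / 2 + (Real.cos (Real.pi * t) / Real.sin (Real.pi * t) / 2 : ℝ) * Complex.I) = 1 := by
  have h2 : 2 * Real.pi * t = 2 * (Real.pi * t) := by ring
  have hc := Real.sin_sq_add_cos_sq (Real.pi * t)
  rw [expTwoPi, h2, Complex.exp_mul_I, ← Complex.ofReal_cos, ← Complex.ofReal_sin,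
    Real.cos_two_mul, Real.sin_two_mul]
  generalize Real.sin (Real.pi * t) = s at *
  generalize Real.cos (Real.pi * t) = c at *
  apply Complex.ext
  · simp [sq]
    field_simp
    ring
  · simp [sq]
    field_simp
    linear_combination (-2 * c) * hc

lemma two_mul_le_sin_pi_mul {δ t : ℝ} (hδ : 0 ≤ δ) (h₁ : δ ≤ t) (h₂ : t ≤ 1 - δ) :
    2 * δ ≤ Real.sin (Real.pi * t) := by
  have hpi := Real.pi_pos
  rcases le_total t (1 / 2) with h | h
  · have := Real.mul_le_sin (x := Real.pi * t) (by nlinarith) (by nlinarith)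
    have h3 : 2 / Real.pi * (Real.pi * t) = 2 * t := by field_simp
    linarith
  · have := Real.mul_le_sin (x := Real.pi * (1 - t)) (by nlinarith) (by nlinarith)
    have h3 : 2 / Real.pi * (Real.pi * (1 - t)) = 2 * (1 - t) := by field_simp
    have h4 : Real.sin (Real.pi * (1 - t)) = Real.sin (Real.pi * t) := by
      rw [← Real.sin_pi_sub]; congr 1; ring
    linarith

lemma cot_antitone_of_sin_pos {s t : ℝ} (hs : 0 ≤ s) (hst : s ≤ t) (ht : t ≤ 1)
    (h₁ : 0 < Real.sin (Real.pi * s)) (h₂ : 0 < Real.sin (Real.pi * t)) :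
    Real.cos (Real.pi * t) / Real.sin (Real.pi * t) ≤
      Real.cos (Real.pi * s) / Real.sin (Real.pi * s) := by
  rw [div_le_div_iff₀ h₂ h₁]
  have hpi := Real.pi_pos
  have h : 0 ≤ Real.sin (Real.pi * t - Real.pi * s) :=
    Real.sin_nonneg_of_nonneg_of_le_pi (by nlinarith) (by nlinarith)
  rw [Real.sin_sub] at h
  linarith

/-- **Kusmin–Landau inequality**, for increments between `0` and `1`. -/
lemma kusmin_landau_aux {φ : ℕ → ℝ} {m : ℕ} {δ : ℝ} (hδ : 0 < δ)
    (h₁ : ∀ n < m, δ ≤ φ (n + 1) - φ n) (h₂ : ∀ n < m, φ (n + 1) - φ n ≤ 1 - δ)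
    (hmono : ∀ n, n + 1 < m → φ (n + 1) - φ n ≤ φ (n + 2) - φ (n + 1)) :
    ‖∑ n ∈ range m, expTwoPi (φ n)‖ ≤ 2 / δ := by
  rcases m with _ | m
  · simp; positivity
  set Γ : ℕ → ℝ := fun n =>
    Real.cos (Real.pi * (φ (n + 1) - φ n)) / Real.sin (Real.pi * (φ (n + 1) - φ n)) / 2 with hΓ
  set c : ℕ → ℂ := fun n => 1 / 2 + (Γ n : ℝ) * Complex.I with hc
  have hsin : ∀ n < m + 1, 2 * δ ≤ Real.sin (Real.pi * (φ (n + 1) - φ n)) := fun n hn =>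
    two_mul_le_sin_pi_mul hδ.le (h₁ n hn) (h₂ n hn)
  have hz : ∀ n < m + 1, expTwoPi (φ n) + expTwoPi (φ (n + 1)) * c n = expTwoPi (φ n) * c n := by
    intro n hn
    have h := one_sub_expTwoPi_mul (t := φ (n + 1) - φ n) (by linarith [hsin n hn])
    have h' : expTwoPi (φ (n + 1)) = expTwoPi (φ n) * expTwoPi (φ (n + 1) - φ n) := by
      rw [← expTwoPi_add]; congr 1; ring
    rw [h']
    linear_combination (-expTwoPi (φ n)) * h
  have hΓabs : ∀ n < m + 1, |Γ n| ≤ 1 / (4 * δ) := by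
    intro n hn
    have hs := hsin n hn
    rw [hΓ, abs_div, abs_div, abs_of_pos (show (0 : ℝ) < 2 by norm_num),
      abs_of_pos (by linarith : 0 < Real.sin (Real.pi * (φ (n + 1) - φ n))), div_div]
    exact div_le_div₀ zero_le_one (Real.abs_cos_le_one _) (by positivity) (by linarith)
  have hcnorm : ∀ n < m + 1, ‖c n‖ ≤ 1 / 2 + 1 / (4 * δ) := by
    intro n hn
    refine (norm_add_le _ _).trans (add_le_add (by simp) ?_)
    rw [norm_mul, Complex.norm_I, mul_one, Complex.norm_real, Real.norm_eq_abs]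
    exact hΓabs n hn
  have key : ∀ j < m + 1, ‖(∑ n ∈ range (j + 1), expTwoPi (φ n)) + expTwoPi (φ (j + 1)) * c j‖ ≤
      ‖c 0‖ + (Γ 0 - Γ j) := by
    intro j
    induction j with
    | zero =>
      intro h
      rw [zero_add, sum_range_one, hz 0 h, norm_mul, norm_expTwoPi, one_mul]
      simp
    | succ j ih =>
      intro h
      have hj := ih (by lia)
      have hle : Γ (j + 1) ≤ Γ j := by
        have hs := hsin j (by lia)
        have hs' := hsin (j + 1) h
        have := cot_antitone_of_sin_pos (hδ.le.trans (h₁ j (by lia))) (hmono j h)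
          ((h₂ (j + 1) h).trans (by linarith)) (by linarith) (by linarith)
        simp only [hΓ]
        linarith
      have heq : (∑ n ∈ range (j + 1 + 1), expTwoPi (φ n)) +
          expTwoPi (φ (j + 1 + 1)) * c (j + 1) =
          ((∑ n ∈ range (j + 1), expTwoPi (φ n)) + expTwoPi (φ (j + 1)) * c j) +
            expTwoPi (φ (j + 1)) * (((Γ (j + 1) - Γ j : ℝ) : ℂ) * Complex.I) := by
        rw [sum_range_succ]
        have := hz (j + 1) h
        have hcc : c (j + 1) - c j = ((Γ (j + 1) - Γ j : ℝ) : ℂ) * Complex.I := by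
          simp only [hc]; push_cast; ring
        rw [← hcc]
        linear_combination this
      rw [heq]
      refine (norm_add_le _ _).trans ?_
      rw [norm_mul, norm_mul, norm_expTwoPi, Complex.norm_I, Complex.norm_real, Real.norm_eq_abs,
        abs_of_nonpos (by linarith)]
      linarith
  have hm := key m (by lia)
  have h0 := hcnorm 0 (by lia)
  have hm' := hcnorm m (by lia)
  have g0 := abs_le.1 (hΓabs 0 (by lia))
  have gm := abs_le.1 (hΓabs m (by lia))
  have hfin : ‖∑ n ∈ range (m + 1), expTwoPi (φ n)‖ ≤
      ‖(∑ n ∈ range (m + 1), expTwoPi (φ n)) + expTwoPi (φ (m + 1)) * c m‖ + ‖c m‖ := by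
    have := norm_sub_le ((∑ n ∈ range (m + 1), expTwoPi (φ n)) + expTwoPi (φ (m + 1)) * c m)
      (expTwoPi (φ (m + 1)) * c m)
    rwa [add_sub_cancel_right, norm_mul (expTwoPi _), norm_expTwoPi, one_mul] at this
  have hδ1 : δ ≤ 1 / 2 := by linarith [h₁ 0 (by lia), h₂ 0 (by lia)]
  have e1 : 1 / (4 * δ) = 1 / δ / 4 := by field_simp
  have e2 : 1 ≤ 1 / δ := by rw [le_div_iff₀ hδ]; linarith
  have e3 : 2 / δ = 2 * (1 / δ) := by ring
  rw [e1] at h0 hm' g0 gm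
  linarith

lemma expTwoPi_sub_int_mul (t : ℝ) (k : ℤ) (n : ℕ) : expTwoPi (t - k * n) = expTwoPi t := by
  rw [expTwoPi, expTwoPi, Complex.exp_eq_exp_iff_exists_int]
  refine ⟨-(k * n), ?_⟩
  push_cast
  ring

/-- **Kusmin–Landau inequality**: an exponential sum whose phase has monotone increments staying
at distance `δ` from the integers is `O(1/δ)`. -/
lemma kusmin_landau {φ : ℕ → ℝ} {m : ℕ} {δ : ℝ} (k : ℤ) (hδ : 0 < δ)
    (h₁ : ∀ n < m, k + δ ≤ φ (n + 1) - φ n) (h₂ : ∀ n < m, φ (n + 1) - φ n ≤ k + 1 - δ)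
    (hmono : ∀ n, n + 1 < m → φ (n + 1) - φ n ≤ φ (n + 2) - φ (n + 1)) :
    ‖∑ n ∈ range m, expTwoPi (φ n)‖ ≤ 2 / δ := by
  have h := kusmin_landau_aux (φ := fun n => φ n - k * n) (m := m) hδ
    (fun n hn => by have := h₁ n hn; push_cast; linarith)
    (fun n hn => by have := h₂ n hn; push_cast; linarith)
    (fun n hn => by have := hmono n hn; push_cast; linarith)
  simpa only [expTwoPi_sub_int_mul] using h

/-- The elements of an initial segment on which a sequence with increments at least `lam` lies in a
window of width `w`. -/
lemma card_filter_window_le {g : ℕ → ℝ} {N : ℕ} {lam w p : ℝ} (hlam : 0 < lam) (hw : 0 ≤ w)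
    (hg : ∀ m n, m ≤ n → n < N → lam * (n - m) ≤ g n - g m)
    {s : Finset ℕ} (hs : ∀ n ∈ s, n < N ∧ p ≤ g n ∧ g n ≤ p + w) :
    (s.card : ℝ) ≤ w / lam + 1 := by
  rcases s.eq_empty_or_nonempty with rfl | hne
  · simp; positivity
  have hsub : s ⊆ Icc (s.min' hne) (s.max' hne) := fun n hn =>
    mem_Icc.2 ⟨s.min'_le n hn, s.le_max' n hn⟩
  have hle : s.min' hne ≤ s.max' hne := s.min'_le _ (s.max'_mem hne)
  have hcard := card_le_card hsub
  rw [Nat.card_Icc] at hcard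
  have hcard' : (s.card : ℝ) ≤ (s.max' hne : ℝ) - s.min' hne + 1 := by
    have : s.card + s.min' hne ≤ s.max' hne + 1 := by lia
    have : (s.card : ℝ) + s.min' hne ≤ s.max' hne + 1 := by exact_mod_cast this
    linarith
  have h1 := hs _ (s.max'_mem hne)
  have h2 := hs _ (s.min'_mem hne)
  have h3 := hg _ _ hle h1.1
  have h4 : (s.max' hne : ℝ) - s.min' hne ≤ w / lam := by
    rw [le_div_iff₀ hlam]
    linarith
  linarith

lemma increments_of_second_differences {g : ℕ → ℝ} {N : ℕ} {lam Lam : ℝ}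
    (h : ∀ n, n + 1 < N → lam ≤ g (n + 1) - g n ∧ g (n + 1) - g n ≤ Lam) :
    ∀ m n, m ≤ n → n < N → lam * (n - m) ≤ g n - g m ∧ g n - g m ≤ Lam * (n - m) := by
  intro m n hmn
  induction n, hmn using Nat.le_induction with
  | base => intro _; simp
  | succ n hmn ih =>
    intro hn
    have h1 := ih (by lia)
    have h2 := h n hn
    push_cast
    constructor <;> linarith

/-- The contribution to an exponential sum of the indices at which the increment of the phase lies
between two consecutive integers. -/
lemma norm_sum_fiber_le {φ : ℕ → ℝ} {N : ℕ} {lam : ℝ} (hlam : 0 < lam) (hlam' : lam ≤ 1 / 16)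
    (hg : ∀ m n, m ≤ n → n < N →
      lam * (n - m) ≤ (φ (n + 1) - φ n) - (φ (m + 1) - φ m)) (k : ℤ) :
    ‖∑ n ∈ range N with ⌊φ (n + 1) - φ n⌋ = k, expTwoPi (φ n)‖ ≤ 5 / √lam := by
  set δ := √lam with hδdef
  have hδ : 0 < δ := Real.sqrt_pos.2 hlam
  have hδ2 : δ * δ = lam := Real.mul_self_sqrt hlam.le
  have hδ4 : δ ≤ 1 / 4 := by nlinarith
  set s := {n ∈ range N | ⌊φ (n + 1) - φ n⌋ = k} with hs
  have hmem : ∀ n ∈ s, n < N ∧ (k : ℝ) ≤ φ (n + 1) - φ n ∧ φ (n + 1) - φ n < k + 1 := by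
    intro n hn
    rw [hs, mem_filter, mem_range, Int.floor_eq_iff] at hn
    exact hn
  set low := {n ∈ s | φ (n + 1) - φ n < k + δ} with hlow
  set rest := {n ∈ s | ¬ φ (n + 1) - φ n < k + δ} with hrest
  set mid := {n ∈ rest | φ (n + 1) - φ n ≤ k + 1 - δ} with hmid
  set high := {n ∈ rest | ¬ φ (n + 1) - φ n ≤ k + 1 - δ} with hhigh
  have triv : ∀ t : Finset ℕ, ‖∑ n ∈ t, expTwoPi (φ n)‖ ≤ t.card := fun t => by
    refine (norm_sum_le _ _).trans ?_
    simp [norm_expTwoPi]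
  have hw : δ / lam = 1 / δ := by rw [← hδ2]; field_simp
  have blow : (low.card : ℝ) ≤ 1 / δ + 1 := by
    rw [← hw]
    refine card_filter_window_le (g := fun n => φ (n + 1) - φ n) (p := k) hlam hδ.le hg ?_
    intro n hn
    rw [hlow, mem_filter] at hn
    have := hmem n hn.1
    exact ⟨this.1, this.2.1, hn.2.le⟩
  have bhigh : (high.card : ℝ) ≤ 1 / δ + 1 := by
    rw [← hw]
    refine card_filter_window_le (g := fun n => φ (n + 1) - φ n) (p := k + 1 - δ) hlam hδ.le hg ?_
    intro n hn
    rw [hhigh, mem_filter, hrest, mem_filter] at hn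
    have := hmem n hn.1.1
    exact ⟨this.1, (not_le.1 hn.2).le, by linarith [this.2.2]⟩
  have bmid : ‖∑ n ∈ mid, expTwoPi (φ n)‖ ≤ 2 / δ := by
    have hmem' : ∀ n, n ∈ mid ↔
        n < N ∧ (k : ℝ) + δ ≤ φ (n + 1) - φ n ∧ φ (n + 1) - φ n ≤ k + 1 - δ := by
      intro n
      rw [hmid, mem_filter, hrest, mem_filter, hs, mem_filter, mem_range, Int.floor_eq_iff, not_lt]
      constructor
      · rintro ⟨⟨⟨h1, -⟩, h2⟩, h3⟩
        exact ⟨h1, h2, h3⟩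
      · rintro ⟨h1, h2, h3⟩
        exact ⟨⟨⟨h1, by linarith, by linarith⟩, h2⟩, h3⟩
    rcases mid.eq_empty_or_nonempty with h0 | hne
    · rw [h0]; simp; positivity
    have hmin := (hmem' _).1 (mid.min'_mem hne)
    have hmax := (hmem' _).1 (mid.max'_mem hne)
    have hle : mid.min' hne ≤ mid.max' hne := mid.min'_le _ (mid.max'_mem hne)
    generalize hA : mid.min' hne = A at *
    generalize hB : mid.max' hne = B at *
    have hmono : ∀ m n, m ≤ n → n < N → φ (m + 1) - φ m ≤ φ (n + 1) - φ n := by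
      intro m n h1 h2
      have h3 := hg m n h1 h2
      have h4 : (m : ℝ) ≤ n := by exact_mod_cast h1
      nlinarith
    have hIco : mid = Ico A (B + 1) := by
      ext n
      rw [mem_Ico]
      constructor
      · intro hn
        exact ⟨hA ▸ mid.min'_le n hn, Nat.lt_succ_of_le (hB ▸ mid.le_max' n hn)⟩
      · rintro ⟨h1, h2⟩
        have h3 : n < N := by lia
        exact (hmem' n).2 ⟨h3, hmin.2.1.trans (hmono A n h1 h3),
          (hmono n B (by lia) hmax.1).trans hmax.2.2⟩
    rw [hIco, sum_Ico_eq_sum_range]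
    have hin : ∀ n < B + 1 - A, A + n ∈ mid := fun n hn => by
      rw [hIco, mem_Ico]; lia
    refine kusmin_landau (φ := fun n => φ (A + n)) k hδ (fun n hn => ?_) (fun n hn => ?_)
      (fun n hn => ?_)
    · exact ((hmem' _).1 (hin n hn)).2.1
    · exact ((hmem' _).1 (hin n hn)).2.2
    · exact hmono (A + n) (A + n + 1) (by lia) (by lia)
  have hsplit : ∑ n ∈ s, expTwoPi (φ n) = ∑ n ∈ low, expTwoPi (φ n) +
      (∑ n ∈ mid, expTwoPi (φ n) + ∑ n ∈ high, expTwoPi (φ n)) := by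
    rw [hmid, hhigh, sum_filter_add_sum_filter_not, hlow, hrest, sum_filter_add_sum_filter_not]
  rw [hsplit]
  have h1 := (norm_add_le (∑ n ∈ low, expTwoPi (φ n))
    (∑ n ∈ mid, expTwoPi (φ n) + ∑ n ∈ high, expTwoPi (φ n)))
  have h2 := norm_add_le (∑ n ∈ mid, expTwoPi (φ n)) (∑ n ∈ high, expTwoPi (φ n))
  have h3 := triv low
  have h4 := triv high
  have e1 : 4 ≤ 1 / δ := by rw [le_div_iff₀ hδ]; linarith
  have e2 : 2 / δ = 2 * (1 / δ) := by ring
  have e3 : 5 / δ = 5 * (1 / δ) := by ring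
  linarith

/-- **Van der Corput's second derivative test**, for sequences. -/
lemma second_difference_test {φ : ℕ → ℝ} {N : ℕ} {lam α : ℝ} (hlam : 0 < lam) (hα : 1 ≤ α)
    (h : ∀ n, n + 1 < N → lam ≤ (φ (n + 2) - φ (n + 1)) - (φ (n + 1) - φ n) ∧
      (φ (n + 2) - φ (n + 1)) - (φ (n + 1) - φ n) ≤ α * lam) :
    ‖∑ n ∈ range N, expTwoPi (φ n)‖ ≤ (α * lam * N + 2) * (5 / √lam) := by
  have hsq : 0 < √lam := Real.sqrt_pos.2 hlam
  have hsq2 : √lam * √lam = lam := Real.mul_self_sqrt hlam.le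
  rcases le_or_gt lam (1 / 16) with hl | hl
  · set g : ℕ → ℝ := fun n => φ (n + 1) - φ n with hgdef
    have hinc := increments_of_second_differences (g := g) h
    rcases Nat.eq_zero_or_pos N with rfl | hN
    · simp; positivity
    have hmono : ∀ m n, m ≤ n → n < N → g m ≤ g n := by
      intro m n h1 h2
      have h3 := (hinc m n h1 h2).1
      have h4 : (m : ℝ) ≤ n := by exact_mod_cast h1
      nlinarith
    rw [← sum_fiberwise_of_maps_to (t := Icc ⌊g 0⌋ ⌊g (N - 1)⌋) (g := fun n => ⌊g n⌋)]
    · refine (norm_sum_le_of_le _ fun k _ =>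
        norm_sum_fiber_le hlam hl (fun m n h1 h2 => (hinc m n h1 h2).1) k).trans ?_
      rw [sum_const, nsmul_eq_mul]
      refine mul_le_mul_of_nonneg_right ?_ (by positivity)
      rw [Int.card_Icc]
      have hfl : ⌊g 0⌋ ≤ ⌊g (N - 1)⌋ := Int.floor_le_floor (hmono _ _ (by lia) (by lia))
      have hcast : ((⌊g (N - 1)⌋ + 1 - ⌊g 0⌋).toNat : ℝ) =
          (⌊g (N - 1)⌋ : ℝ) + 1 - ⌊g 0⌋ := by
        have := Int.toNat_of_nonneg (show 0 ≤ ⌊g (N - 1)⌋ + 1 - ⌊g 0⌋ by lia)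
        exact_mod_cast congrArg (Int.cast (R := ℝ)) this
      rw [hcast]
      have h1 := (hinc 0 (N - 1) (by lia) (by lia)).2
      have h2 := Int.floor_le (g (N - 1))
      have h3 := Int.lt_floor_add_one (g 0)
      rw [Nat.cast_sub hN] at h1
      push_cast at h1
      have h4 : 0 ≤ α * lam := by positivity
      nlinarith
    · intro n hn
      rw [mem_range] at hn
      exact mem_Icc.2 ⟨Int.floor_le_floor (hmono _ _ (by lia) hn),
        Int.floor_le_floor (hmono _ _ (by lia) (by lia))⟩
  · have h1 : ‖∑ n ∈ range N, expTwoPi (φ n)‖ ≤ N := by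
      refine (norm_sum_le _ _).trans ?_
      simp [norm_expTwoPi]
    have h2 : 1 / 4 ≤ √lam := Real.le_sqrt_of_sq_le (by linarith)
    have h3 : (α * lam * N + 2) * (5 / √lam) = 5 * α * √lam * N + 10 / √lam := by
      field_simp
      rw [sq, hsq2]
      ring
    rw [h3]
    have h4 : 0 ≤ 10 / √lam := by positivity
    have h5 : 1 ≤ 5 * α * √lam := by nlinarith
    have h6 : (0 : ℝ) ≤ N := by positivity
    nlinarith

/-- The sawtooth function `{t} - 1/2`. -/
noncomputable def sawtooth (t : ℝ) : ℝ := Int.fract t - 1 / 2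

lemma abs_sawtooth_le (t : ℝ) : |sawtooth t| ≤ 1 / 2 := by
  have h1 := Int.fract_nonneg t
  have h2 := (Int.fract_lt_one t).le
  rw [sawtooth, abs_le]
  constructor <;> linarith

lemma bernoulliFun_two_fract_add_le (t ε : ℝ) :
    bernoulliFun 2 (Int.fract (t + ε)) ≤
      bernoulliFun 2 (Int.fract t) + 2 * ε * sawtooth t + ε ^ 2 := by
  rw [bernoulliFun_two, bernoulliFun_two, sawtooth]
  set v := Int.fract (t + ε) with hv
  set u := Int.fract t with hu
  obtain ⟨m, hm⟩ : ∃ m : ℤ, u + ε = v + m := by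
    refine ⟨⌊t + ε⌋ - ⌊t⌋, ?_⟩
    rw [hu, hv, Int.fract, Int.fract]
    push_cast
    ring
  have hv0 : 0 ≤ v := Int.fract_nonneg _
  have hv1 : v < 1 := Int.fract_lt_one _
  have hkey : 0 ≤ (m : ℝ) * (m - 1 + 2 * v) := by
    rcases le_or_gt m 0 with h | h
    · rcases h.lt_or_eq with h | h
      · have h' : (m : ℝ) ≤ -1 := by exact_mod_cast (by lia : m ≤ -1)
        nlinarith
      · simp [h]
    · have h' : (1 : ℝ) ≤ m := by exact_mod_cast h
      have : 0 ≤ (m : ℝ) - 1 + 2 * v := by linarith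
      positivity
  have hsq : (u + ε) ^ 2 = (v + m) ^ 2 := by rw [hm]
  nlinarith

lemma hasSum_cos_bernoulliFun_two (t : ℝ) :
    HasSum (fun h : ℕ => 1 / (h : ℝ) ^ 2 * Real.cos (2 * Real.pi * (h * t)))
      (Real.pi ^ 2 * bernoulliFun 2 (Int.fract t)) := by
  have h := hasSum_one_div_nat_pow_mul_cos (k := 1) one_ne_zero (x := Int.fract t)
    ⟨Int.fract_nonneg t, (Int.fract_lt_one t).le⟩
  convert h using 1
  · ext n
    congr 1
    have : 2 * Real.pi * n * Int.fract t =
        2 * Real.pi * (n * t) - (n * ⌊t⌋ : ℤ) * (2 * Real.pi) := by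
      rw [Int.fract]; push_cast; ring
    rw [this, Real.cos_sub_int_mul_two_pi]
  · rw [bernoulliFun]
    norm_num [Nat.factorial]
    ring_nf
    simp

/-- The weights `h ^ (-3/2) min(1, h / H)` sum to `O(H ^ (-1/2))`. -/
lemma sum_min_mul_sqrt_div_sq_le {H : ℕ} (hH : 0 < H) (M : ℕ) :
    ∑ h ∈ range M, min 1 ((h : ℝ) / H) * (√h / (h : ℝ) ^ 2) ≤ 4 / √H := by
  have hH' : (0 : ℝ) < H := by exact_mod_cast hH
  have hsH : 0 < √(H : ℝ) := Real.sqrt_pos.2 hH'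
  have hsH2 : √(H : ℝ) * √(H : ℝ) = H := Real.mul_self_sqrt hH'.le
  have hstep : ∀ n : ℕ, 0 ≤ √(n : ℝ) ∧ √(n : ℝ) < √((n + 1 : ℕ) : ℝ) ∧
      √(n : ℝ) * √(n : ℝ) = n ∧
      √((n + 1 : ℕ) : ℝ) * √((n + 1 : ℕ) : ℝ) = (n : ℝ) + 1 := by
    intro n
    refine ⟨Real.sqrt_nonneg _, Real.sqrt_lt_sqrt (by positivity) (by push_cast; linarith),
      Real.mul_self_sqrt (by positivity), ?_⟩
    rw [Real.mul_self_sqrt (by positivity)]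
    push_cast
    rfl
  have hsmall : ∀ m : ℕ,
      ∑ h ∈ range (m + 1), min 1 ((h : ℝ) / H) * (√h / (h : ℝ) ^ 2) ≤ 2 * √m / H := by
    intro m
    induction m with
    | zero => simp
    | succ m ih =>
      rw [sum_range_succ]
      obtain ⟨h0, h1, h2, h3⟩ := hstep m
      have hb : ((m + 1 : ℕ) : ℝ) = √((m + 1 : ℕ) : ℝ) * √((m + 1 : ℕ) : ℝ) := by
        rw [h3]; push_cast; rfl
      have : min 1 (((m + 1 : ℕ) : ℝ) / H) * (√((m + 1 : ℕ) : ℝ) / ((m + 1 : ℕ) : ℝ) ^ 2) ≤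
          2 * √((m + 1 : ℕ) : ℝ) / H - 2 * √m / H := by
        refine (mul_le_mul_of_nonneg_right (min_le_right _ _) (by positivity)).trans ?_
        generalize √((m + 1 : ℕ) : ℝ) = b at *
        generalize √(m : ℝ) = a at *
        have hbpos : 0 < b := by linarith
        rw [hb]
        have e : b * b / H * (b / (b * b) ^ 2) = (1 / b) / H := by field_simp
        rw [e, ← sub_div]
        refine div_le_div_of_nonneg_right ?_ hH'.le
        rw [div_le_iff₀ hbpos]
        nlinarith
      linarith
  have hbig : ∀ m : ℕ, H ≤ m →
      ∑ h ∈ range (m + 1), min 1 ((h : ℝ) / H) * (√h / (h : ℝ) ^ 2) ≤ 4 / √H - 2 / √m := by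
    intro m hm
    induction m, hm using Nat.le_induction with
    | base =>
      refine (hsmall H).trans (le_of_eq ?_)
      nth_rewrite 2 [← hsH2]
      field_simp
      norm_num
    | succ m hm ih =>
      rw [sum_range_succ]
      obtain ⟨h0, h1, h2, h3⟩ := hstep m
      have hm0 : (0 : ℝ) < m := by exact_mod_cast (by lia : 0 < m)
      have ha : 0 < √(m : ℝ) := Real.sqrt_pos.2 hm0
      have hb : ((m + 1 : ℕ) : ℝ) = √((m + 1 : ℕ) : ℝ) * √((m + 1 : ℕ) : ℝ) := by
        rw [h3]; push_cast; rfl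
      have : min 1 (((m + 1 : ℕ) : ℝ) / H) * (√((m + 1 : ℕ) : ℝ) / ((m + 1 : ℕ) : ℝ) ^ 2) ≤
          2 / √m - 2 / √((m + 1 : ℕ) : ℝ) := by
        refine (mul_le_mul_of_nonneg_right (min_le_left _ _) (by positivity)).trans ?_
        generalize √((m + 1 : ℕ) : ℝ) = b at *
        generalize √(m : ℝ) = a at *
        have hbpos : 0 < b := by linarith
        rw [hb, one_mul, div_sub_div _ _ ha.ne' hbpos.ne', div_le_div_iff₀ (by positivity)
          (by positivity)]
        have e1 : (b - a) * (b + a) = 1 := by nlinarith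
        have e2 : 1 ≤ (b - a) * (2 * b) := by nlinarith
        have e3 : b * (a * b) ≤ b * (b * b) := by gcongr
        have e4 : b * (b * b) * 1 ≤ b * (b * b) * ((b - a) * (2 * b)) := by gcongr
        nlinarith
      linarith
  rcases M with _ | m
  · simp; positivity
  rcases le_total H m with h | h
  · refine (hbig m h).trans ?_
    have : 0 ≤ 2 / √(m : ℝ) := by positivity
    linarith
  · refine (hsmall m).trans ?_
    have h1 : √(m : ℝ) ≤ √(H : ℝ) := Real.sqrt_le_sqrt (by exact_mod_cast h)
    rw [div_le_div_iff₀ hH' hsH]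
    nlinarith [Real.sqrt_nonneg (m : ℝ)]

/-- A bound for sawtooth sums in terms of exponential sums. -/
lemma abs_sum_sawtooth_le {F : ℕ → ℝ} {N H : ℕ} {B : ℝ} (hH : 0 < H)
    (hB : ∀ h : ℕ, 0 < h → ‖∑ n ∈ range N, expTwoPi (h * F n)‖ ≤ B * √h) :
    |∑ n ∈ range N, sawtooth (F n)| ≤ N / H + 2 * B * √H := by
  have hH' : (0 : ℝ) < H := by exact_mod_cast hH
  have hsH : 0 < √(H : ℝ) := Real.sqrt_pos.2 hH'
  have hsH2 : √(H : ℝ) * √(H : ℝ) = H := Real.mul_self_sqrt hH'.le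
  have hB0 : 0 ≤ B := by simpa using (norm_nonneg _).trans (hB 1 one_pos)
  have hpi := Real.pi_pos
  have hdiff : ∀ ε : ℝ, |ε| = 1 / H →
      |∑ n ∈ range N, (bernoulliFun 2 (Int.fract (F n + ε)) - bernoulliFun 2 (Int.fract (F n)))| ≤
        4 * B / √H := by
    intro ε hε
    have hs : HasSum (fun h : ℕ => ∑ n ∈ range N,
        (1 / (h : ℝ) ^ 2 * Real.cos (2 * Real.pi * (h * (F n + ε))) -
          1 / (h : ℝ) ^ 2 * Real.cos (2 * Real.pi * (h * F n))))
        (∑ n ∈ range N, (Real.pi ^ 2 * bernoulliFun 2 (Int.fract (F n + ε)) -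
          Real.pi ^ 2 * bernoulliFun 2 (Int.fract (F n)))) :=
      hasSum_sum fun n _ =>
        (hasSum_cos_bernoulliFun_two (F n + ε)).sub (hasSum_cos_bernoulliFun_two (F n))
    have hterm : ∀ h : ℕ, |∑ n ∈ range N,
        (1 / (h : ℝ) ^ 2 * Real.cos (2 * Real.pi * (h * (F n + ε))) -
          1 / (h : ℝ) ^ 2 * Real.cos (2 * Real.pi * (h * F n)))| ≤
        2 * Real.pi * B * (min 1 ((h : ℝ) / H) * (√h / (h : ℝ) ^ 2)) := by
      intro h
      rcases Nat.eq_zero_or_pos h with rfl | hh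
      · simp
      have hh' : (0 : ℝ) < h := by exact_mod_cast hh
      have e1 : ∑ n ∈ range N,
          (1 / (h : ℝ) ^ 2 * Real.cos (2 * Real.pi * (h * (F n + ε))) -
            1 / (h : ℝ) ^ 2 * Real.cos (2 * Real.pi * (h * F n))) =
          1 / (h : ℝ) ^ 2 *
            ((∑ n ∈ range N, expTwoPi (h * F n)) * (expTwoPi (h * ε) - 1)).re := by
        rw [sum_mul, Complex.re_sum, mul_sum]
        refine sum_congr rfl fun n _ => ?_
        rw [mul_sub, mul_one, ← expTwoPi_add, Complex.sub_re, expTwoPi_re, expTwoPi_re, mul_add]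
        ring
      have e2 : ‖expTwoPi (h * ε) - 1‖ ≤ 2 * Real.pi * min 1 ((h : ℝ) / H) := by
        rw [mul_min_of_nonneg _ _ (by positivity)]
        refine le_min ?_ ?_
        · refine (norm_sub_le _ _).trans ?_
          rw [norm_expTwoPi, norm_one]
          linarith [Real.pi_gt_three]
        · refine (norm_expTwoPi_sub_one_le _).trans (le_of_eq ?_)
          rw [abs_mul, hε, abs_of_pos hh']
          ring
      rw [e1, abs_mul, abs_of_pos (by positivity : 0 < 1 / (h : ℝ) ^ 2)]
      calc 1 / (h : ℝ) ^ 2 *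
            |((∑ n ∈ range N, expTwoPi (h * F n)) * (expTwoPi (h * ε) - 1)).re|
          ≤ 1 / (h : ℝ) ^ 2 * ((B * √h) * (2 * Real.pi * min 1 ((h : ℝ) / H))) := by
            refine mul_le_mul_of_nonneg_left ?_ (by positivity)
            refine (Complex.abs_re_le_norm _).trans ?_
            rw [norm_mul]
            exact mul_le_mul (hB h hh) e2 (norm_nonneg _) (by positivity)
        _ = _ := by ring
    have hlim := (hs.tendsto_sum_nat).abs
    have hbound := le_of_tendsto' hlim (b := 2 * Real.pi * B * (4 / √H)) fun M => by
      refine (abs_sum_le_sum_abs _ _).trans ((sum_le_sum fun h _ => hterm h).trans ?_)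
      rw [← mul_sum]
      exact mul_le_mul_of_nonneg_left (sum_min_mul_sqrt_div_sq_le hH M) (by positivity)
    simp_rw [← mul_sub] at hbound
    rw [← mul_sum, abs_mul, abs_of_pos (by positivity : 0 < Real.pi ^ 2)] at hbound
    have h3 : Real.pi ^ 2 * (4 * B / √H) ≥ 2 * Real.pi * B * (4 / √H) := by
      have : Real.pi ^ 2 * (4 * B / √H) - 2 * Real.pi * B * (4 / √H) =
        Real.pi * (Real.pi - 2) * (4 * B / √H) := by ring
      have h4 : 0 ≤ Real.pi * (Real.pi - 2) * (4 * B / √H) :=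
        mul_nonneg (mul_nonneg hpi.le (by linarith [Real.pi_gt_three])) (by positivity)
      linarith
    exact le_of_mul_le_mul_left (hbound.trans h3) (by positivity)
  have hone : ∀ ε : ℝ, |ε| = 1 / H →
      -(4 * B / √H) ≤ 2 * ε * ∑ n ∈ range N, sawtooth (F n) + N * (1 / H) ^ 2 := by
    intro ε hε
    have h1 := (abs_le.1 (hdiff ε hε)).1
    refine h1.trans ?_
    calc _ ≤ ∑ n ∈ range N, (2 * ε * sawtooth (F n) + ε ^ 2) :=
          sum_le_sum fun n _ => by linarith [bernoulliFun_two_fract_add_le (F n) ε]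
      _ = _ := by
        rw [sum_add_distrib, ← mul_sum, sum_const, card_range, nsmul_eq_mul, ← hε, sq_abs]
  have hp := hone (1 / H) (abs_of_pos (by positivity))
  have hn := hone (-(1 / H)) (by rw [abs_neg]; exact abs_of_pos (by positivity))
  have hN : (0 : ℝ) ≤ N / H := by positivity
  set S := ∑ n ∈ range N, sawtooth (F n)
  have e1 : 4 * B / √H = (2 / H) * (2 * B * √H) := by
    rw [div_mul_eq_mul_div, div_eq_div_iff hsH.ne' hH'.ne']
    linear_combination (-4 * B) * hsH2
  have e2 : (N : ℝ) * (1 / H) ^ 2 = (2 / H) * (N / H / 2) := by ring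
  have h2H : (0 : ℝ) < 2 / H := by positivity
  rw [e1, e2] at hp hn
  rw [abs_le]
  constructor
  · have : (2 / H : ℝ) * (-(2 * B * √H)) ≤ (2 / H) * (S + N / H / 2) := by
      calc _ = -((2 / H : ℝ) * (2 * B * √H)) := by ring
        _ ≤ _ := hp
        _ = _ := by ring
    linarith [le_of_mul_le_mul_left this h2H]
  · have : (2 / H : ℝ) * (-(2 * B * √H)) ≤ (2 / H) * (-S + N / H / 2) := by
      calc _ = -((2 / H : ℝ) * (2 * B * √H)) := by ring
        _ ≤ _ := hn
        _ = _ := by ring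
    linarith [le_of_mul_le_mul_left this h2H]

lemma div_shifted_product_bounds {K w z : ℝ} (hK : 0 < K) (hw : K ≤ w) (hw' : w + 2 ≤ 3 * K)
    (hz : 0 ≤ z) :
    z / (27 * K ^ 3) ≤ z / (w * (w + 1) * (w + 2)) ∧ z / (w * (w + 1) * (w + 2)) ≤ z / K ^ 3 := by
  have hw0 : 0 < w := hK.trans_le hw
  constructor
  · refine div_le_div_of_nonneg_left hz (by positivity) ?_
    calc w * (w + 1) * (w + 2) ≤ (3 * K) * (3 * K) * (3 * K) :=
          mul_le_mul (mul_le_mul (by linarith) (by linarith) (by linarith) (by linarith)) hw'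
            (by linarith) (by positivity)
      _ = 27 * K ^ 3 := by ring
  · refine div_le_div_of_nonneg_left hz (by positivity) ?_
    calc K ^ 3 = K * K * K := by ring
      _ ≤ w * (w + 1) * (w + 2) :=
          mul_le_mul (mul_le_mul hw (by linarith) hK.le hw0.le) (by linarith) hK.le
            (by positivity)

lemma norm_sum_expTwoPi_hyperbola_le {K N h : ℕ} {y a b : ℝ} (hK : 0 < K) (hKy : (K : ℝ) ^ 2 ≤ y)
    (ha : 0 ≤ a) (ha' : a ≤ 1) (hN : N ≤ K) (hh : 0 < h) :
    ‖∑ n ∈ range N, expTwoPi (h * (y / ((K + n : ℕ) + a) + b))‖ ≤ 80 * √(y / K) * √h := by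
  have hK0 : (0 : ℝ) < K := by exact_mod_cast hK
  have hK1 : (1 : ℝ) ≤ K := by exact_mod_cast hK
  have hh1 : (1 : ℝ) ≤ h := by exact_mod_cast hh
  have hy : 0 < y := lt_of_lt_of_le (by positivity) hKy
  set lam : ℝ := 2 * h * y / (27 * K ^ 3) with hlam
  have hlam0 : 0 < lam := by positivity
  have key := second_difference_test (φ := fun n : ℕ => h * (y / ((K + n : ℕ) + a) + b)) (N := N)
    (lam := lam) (α := 27) hlam0 (by norm_num) ?_
  · refine key.trans ?_
    set q := √(y / K) with hq
    set r := √(h : ℝ) with hr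
    set s := √(2 / 27 : ℝ) with hs
    have hq0 : 0 < q := Real.sqrt_pos.2 (by positivity)
    have hq2 : q * q = y / K := Real.mul_self_sqrt (by positivity)
    have hr2 : r * r = h := Real.mul_self_sqrt (by positivity)
    have hs2 : s * s = 2 / 27 := Real.mul_self_sqrt (by norm_num)
    have hs0 : 0 < s := Real.sqrt_pos.2 (by norm_num)
    have hr1 : 1 ≤ r := Real.one_le_sqrt.2 hh1
    have hsl : 0.27 ≤ s := by nlinarith
    have hsu : s ≤ 0.28 := by nlinarith
    have hsqrt : √lam = s * r * q / K := by
      rw [Real.sqrt_eq_iff_mul_self_eq hlam0.le (by positivity), eq_comm]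
      calc s * r * q / K * (s * r * q / K) = (s * s) * (r * r) * (q * q) / K ^ 2 := by ring
        _ = lam := by rw [hs2, hr2, hq2, hlam]; field_simp
    have hlam2 : lam = √lam * √lam := (Real.mul_self_sqrt hlam0.le).symm
    have hl0 : 0 < √lam := Real.sqrt_pos.2 hlam0
    have e : (27 * lam * N + 2) * (5 / √lam) = 135 * √lam * N + 10 / √lam := by
      nth_rewrite 1 [hlam2]
      field_simp
      ring
    have hNK : (N : ℝ) ≤ K := by exact_mod_cast hN
    have h1 : √lam * N ≤ s * r * q := by
      calc √lam * N ≤ √lam * K := by gcongr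
        _ = s * r * q := by rw [hsqrt]; field_simp
    have h2 : 1 / √lam ≤ r * q / s := by
      rw [hsqrt, one_div_div, div_le_div_iff₀ (by positivity) hs0]
      have : (K : ℝ) ≤ q * q := by
        rw [hq2, le_div_iff₀ hK0]; linarith
      have h3 : 1 ≤ r * r := by nlinarith
      have h4 : (K : ℝ) ≤ (r * r) * (q * q) := by nlinarith
      calc K * s ≤ (r * r) * (q * q) * s := by gcongr
        _ = _ := by ring
    have h5 : r * q / s ≤ 4 * (r * q) := by
      rw [div_le_iff₀ hs0]
      nlinarith [mul_pos (by linarith : 0 < r) hq0]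
    have h6 : s * r * q ≤ 0.28 * (r * q) := by
      rw [mul_assoc]; gcongr
    rw [e]
    have h7 : 10 / √lam = 10 * (1 / √lam) := by ring
    nlinarith [mul_pos (by linarith : 0 < r) hq0]
  · intro n hn
    have hnK : ((n : ℝ) + 2) ≤ K := by exact_mod_cast (by lia : n + 2 ≤ K)
    have hn0 : (0 : ℝ) ≤ n := by positivity
    push_cast
    set w : ℝ := K + n + a with hw
    have hwK : (K : ℝ) ≤ w := by linarith
    have hw0 : 0 < w := by linarith
    have hw2 : w + 2 ≤ 3 * K := by linarith
    have e : (h * (y / (K + (n + 2) + a) + b) - h * (y / (K + (n + 1) + a) + b)) -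
        (h * (y / (K + (n + 1) + a) + b) - h * (y / (K + n + a) + b)) =
        2 * h * y / (w * (w + 1) * (w + 2)) := by
      have e1 : (K : ℝ) + (n + 2) + a = w + 2 := by rw [hw]; ring
      have e2 : (K : ℝ) + (n + 1) + a = w + 1 := by rw [hw]; ring
      rw [e1, e2, ← hw]
      field_simp
      ring
    rw [e]
    have h27 : 27 * lam = 2 * h * y / K ^ 3 := by rw [hlam]; field_simp
    rw [h27]
    exact div_shifted_product_bounds hK0 hwK hw2 (by positivity)

lemma abs_sum_sawtooth_block_le {K N : ℕ} {y Y a b : ℝ} (hK : 0 < K) (hKy : (K : ℝ) ^ 2 ≤ y)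
    (hY : 0 < Y) (hYy : Y ^ 3 = y) (ha : 0 ≤ a) (ha' : a ≤ 1) (hN : N ≤ K) :
    |∑ n ∈ range N, sawtooth (y / ((K + n : ℕ) + a) + b)| ≤ 400 * Y := by
  have hK0 : (0 : ℝ) < K := by exact_mod_cast hK
  have hNK : (N : ℝ) ≤ K := by exact_mod_cast hN
  rcases le_total (K : ℝ) Y with h | h
  · refine (abs_sum_le_sum_abs _ _).trans ((sum_le_sum fun n _ => abs_sawtooth_le _).trans ?_)
    rw [sum_const, card_range, nsmul_eq_mul]
    linarith
  · have hH : 0 < ⌈(K : ℝ) / Y⌉₊ := Nat.ceil_pos.2 (by positivity)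
    have h1 := abs_sum_sawtooth_le (F := fun n : ℕ => y / ((K + n : ℕ) + a) + b) (N := N)
      (B := 80 * √(y / K)) hH
      (fun h hh => norm_sum_expTwoPi_hyperbola_le hK hKy ha ha' hN hh)
    have hle := Nat.le_ceil ((K : ℝ) / Y)
    have hlt := Nat.ceil_lt_add_one (show 0 ≤ (K : ℝ) / Y by positivity)
    have hH0 : (0 : ℝ) < ⌈(K : ℝ) / Y⌉₊ := by exact_mod_cast hH
    generalize (⌈(K : ℝ) / Y⌉₊ : ℝ) = H at *
    have hone : 1 ≤ (K : ℝ) / Y := by rwa [one_le_div hY]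
    have h2 : (N : ℝ) / H ≤ Y := by
      rw [div_le_iff₀ hH0]
      rw [div_le_iff₀ hY] at hle
      linarith
    have h3 : √(y / K) * √H ≤ 2 * Y := by
      rw [← Real.sqrt_mul' _ hH0.le]
      refine Real.sqrt_le_iff.2 ⟨by positivity, ?_⟩
      have : H ≤ 2 * (K / Y) := by linarith
      calc y / K * H ≤ y / K * (2 * (K / Y)) := by
            refine mul_le_mul_of_nonneg_left this ?_
            rw [← hYy]; positivity
        _ = 2 * Y ^ 2 := by rw [← hYy]; field_simp
        _ ≤ (2 * Y) ^ 2 := by nlinarith [sq_nonneg Y]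
    nlinarith

/-- Sawtooth sums along a hyperbola up to the diagonal, by dyadic decomposition. -/
lemma abs_sum_sawtooth_le_of_lt_two_pow {y Y a b : ℝ} (hY : 0 < Y) (hYy : Y ^ 3 = y) (ha : 0 ≤ a)
    (ha' : a ≤ 1) (j : ℕ) : ∀ U : ℕ, U < 2 ^ j → (U : ℝ) ^ 2 ≤ y →
    |∑ n ∈ Ico 1 (U + 1), sawtooth (y / (n + a) + b)| ≤ 400 * Y * j := by
  induction j with
  | zero =>
    intro U hU _
    have : U = 0 := by simpa using hU
    simp [this]
  | succ j ih =>
    intro U hU hUy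
    have hpow : 0 < 2 ^ j := by positivity
    rcases lt_or_ge U (2 ^ j) with h | h
    · refine (ih U h hUy).trans ?_
      push_cast
      nlinarith
    · have hKy : ((2 ^ j : ℕ) : ℝ) ^ 2 ≤ y := by
        refine le_trans ?_ hUy
        gcongr
      have h1 := ih (2 ^ j - 1) (by lia) (by
        refine le_trans ?_ hKy
        gcongr
        lia)
      rw [Nat.sub_add_cancel hpow] at h1
      have h2 := abs_sum_sawtooth_block_le (N := U + 1 - 2 ^ j) (b := b) hpow hKy hY hYy ha ha'
        (by rw [pow_succ] at hU; lia)
      rw [← sum_Ico_consecutive _ (show 1 ≤ 2 ^ j from hpow) (show 2 ^ j ≤ U + 1 by lia),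
        sum_Ico_eq_sum_range _ (2 ^ j)]
      refine (abs_add_le _ _).trans ?_
      push_cast at h2 ⊢
      linarith

lemma abs_sum_sawtooth_hyperbola_le {y Y a b : ℝ} {U X : ℕ} (hY : 0 < Y) (hYy : Y ^ 3 = y)
    (ha : 0 ≤ a) (ha' : a ≤ 1) (hU : (U : ℝ) ^ 2 ≤ y) (hUX : U ≤ X) :
    |∑ n ∈ Ico 1 (U + 1), sawtooth (y / (n + a) + b)| ≤ 800 * Y * (1 + Real.log X) := by
  refine (abs_sum_sawtooth_le_of_lt_two_pow hY hYy ha ha' (Nat.log 2 X + 1) U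
    (hUX.trans_lt (Nat.lt_pow_succ_log_self one_lt_two X)) hU).trans ?_
  have h1 : (Nat.log 2 X : ℝ) ≤ 2 * Real.log X := by
    refine (Real.natLog_le_logb X 2).trans ?_
    have hlog : 0 ≤ Real.log X := Real.log_natCast_nonneg X
    rw [Real.logb, div_le_iff₀ (Real.log_pos (by norm_num))]
    have := Real.log_two_gt_d9
    push_cast
    nlinarith
  push_cast
  nlinarith

lemma le_div_sub_div_iff {X n d r k : ℕ} (hn : 0 < n) (hd : 0 < d) (hr : r ≤ X / n) :
    k ≤ (X / n - r) / d ↔ n * (d * k + r) ≤ X := by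
  rw [Nat.le_div_iff_mul_le hd, Nat.le_sub_iff_add_le hr, Nat.le_div_iff_mul_le hn]
  rw [mul_comm n, mul_comm d]

lemma card_filter_hyperbola_left {X V d r : ℕ} (hV : V ≤ X) (hd : 0 < d) (hr : r ≤ 1) :
    #{p ∈ Ico 1 (V + 1) ×ˢ Ico 1 (X + 1) | p.1 * (d * p.2 + r) ≤ X} =
      ∑ n ∈ Ico 1 (V + 1), (X / n - r) / d := by
  rw [card_filter, sum_product]
  refine sum_congr rfl fun n hn => ?_
  rw [mem_Ico] at hn
  have hdiv : r ≤ X / n := hr.trans ((Nat.one_le_div_iff (by lia)).2 (by lia))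
  rw [← card_filter]
  have : {k ∈ Ico 1 (X + 1) | n * (d * k + r) ≤ X} = Ico 1 ((X / n - r) / d + 1) := by
    ext k
    rw [mem_filter, mem_Ico, mem_Ico, Nat.lt_succ_iff, Nat.lt_succ_iff,
      le_div_sub_div_iff (by lia) hd hdiv]
    constructor
    · rintro ⟨⟨h1, -⟩, h2⟩
      exact ⟨h1, h2⟩
    · rintro ⟨h1, h2⟩
      refine ⟨⟨h1, ?_⟩, h2⟩
      calc k ≤ d * k + r := by nlinarith
        _ ≤ n * (d * k + r) := Nat.le_mul_of_pos_left _ (by lia)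
        _ ≤ X := h2
  rw [this, Nat.card_Ico, Nat.add_sub_cancel]

lemma card_filter_hyperbola_right {X V d r : ℕ} (hd : 0 < d) :
    #{p ∈ Ico 1 (X + 1) ×ˢ Ico 1 (V + 1) | p.1 * (d * p.2 + r) ≤ X} =
      ∑ k ∈ Ico 1 (V + 1), X / (d * k + r) := by
  rw [card_filter, sum_product_right]
  refine sum_congr rfl fun k hk => ?_
  rw [mem_Ico] at hk
  have hpos : 0 < d * k + r := by
    have : 0 < d * k := Nat.mul_pos hd (by lia)
    lia
  rw [← card_filter]
  have : {n ∈ Ico 1 (X + 1) | n * (d * k + r) ≤ X} = Ico 1 (X / (d * k + r) + 1) := by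
    ext n
    rw [mem_filter, mem_Ico, mem_Ico, Nat.lt_succ_iff, Nat.lt_succ_iff,
      Nat.le_div_iff_mul_le hpos]
    constructor
    · rintro ⟨⟨h1, -⟩, h2⟩
      exact ⟨h1, h2⟩
    · rintro ⟨h1, h2⟩
      exact ⟨⟨h1, (Nat.le_mul_of_pos_right _ hpos).trans h2⟩, h2⟩
  rw [this, Nat.card_Ico, Nat.add_sub_cancel]

/-- Dirichlet's hyperbola method for the pairs `(n, k)` with `n (d k + r) ≤ X`, where `r ≤ 1`. -/
lemma hyperbola_method {X d r U : ℕ} (hd : 0 < d) (hr : r ≤ 1) (hU : d * (U * U) ≤ X)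
    (hU' : X < d * ((U + 1) * (U + 1))) :
    ∃ θ ≤ 1, ∑ n ∈ Ico 1 (X + 1), (X / n - r) / d + U * U =
      ∑ n ∈ Ico 1 (U + 1), (X / n - r) / d + ∑ k ∈ Ico 1 (U + 1), X / (d * k + r) + θ := by
  have hUX : U ≤ X := by nlinarith
  set E := {p ∈ Ico 1 (X + 1) ×ˢ Ico 1 (X + 1) | p.1 * (d * p.2 + r) ≤ X} with hE
  set E₁ := {p ∈ Ico 1 (U + 1) ×ˢ Ico 1 (X + 1) | p.1 * (d * p.2 + r) ≤ X} with hE₁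
  set E₂ := {p ∈ Ico 1 (X + 1) ×ˢ Ico 1 (U + 1) | p.1 * (d * p.2 + r) ≤ X} with hE₂
  have hunion : E = E₁ ∪ E₂ := by
    ext ⟨n, k⟩
    simp only [hE, hE₁, hE₂, mem_union, mem_filter, mem_product, mem_Ico]
    constructor
    · rintro ⟨h1, h2⟩
      by_cases hn : n < U + 1
      · left; lia
      · right
        refine ⟨⟨h1.1, h1.2.1, ?_⟩, h2⟩
        by_contra hk
        have h3 : (U + 1) * (U + 1) ≤ n * k := Nat.mul_le_mul (by lia) (by lia)
        have h4 : d * ((U + 1) * (U + 1)) ≤ d * (n * k) := Nat.mul_le_mul_left d h3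
        nlinarith
    · rintro (h | h) <;> exact ⟨⟨by lia, by lia⟩, h.2⟩
  have hsub : E₁ ∩ E₂ ⊆ Ico 1 (U + 1) ×ˢ Ico 1 (U + 1) := by
    rintro ⟨n, k⟩ h
    simp only [hE₁, hE₂, mem_inter, mem_filter, mem_product, mem_Ico] at h ⊢
    lia
  have hsup : (Ico 1 (U + 1) ×ˢ Ico 1 (U + 1)).erase (U, U) ⊆ E₁ ∩ E₂ := by
    rintro ⟨n, k⟩ h
    simp only [mem_erase, mem_product, mem_Ico, ne_eq, Prod.mk.injEq] at h
    obtain ⟨hne, hn, hk⟩ := h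
    have hnk : n * (k + 1) ≤ U * U := by
      rcases Nat.lt_or_ge k U with h | h
      · exact Nat.mul_le_mul (by lia) (by lia)
      · have hkU : k = U := by lia
        have h' : n + 1 ≤ U := by lia
        subst hkU
        nlinarith
    have hle : n * (d * k + r) ≤ X := by
      calc n * (d * k + r) ≤ n * (d * k + d) := by gcongr; lia
        _ = d * (n * (k + 1)) := by ring
        _ ≤ d * (U * U) := by gcongr
        _ ≤ X := hU
    simp only [hE₁, hE₂, mem_inter, mem_filter, mem_product, mem_Ico]
    refine ⟨⟨⟨hn, hk.1, by lia⟩, hle⟩, ⟨⟨⟨hn.1, by lia⟩, hk⟩, hle⟩⟩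
  have hc1 := card_le_card hsub
  have hc2 := (pred_card_le_card_erase).trans (card_le_card hsup)
  rw [card_product, Nat.card_Ico, Nat.add_sub_cancel] at hc1 hc2
  have hc := card_union_add_card_inter E₁ E₂
  rw [← hunion, hE, hE₁, hE₂, card_filter_hyperbola_left le_rfl hd hr,
    card_filter_hyperbola_left hUX hd hr, card_filter_hyperbola_right hd] at hc
  refine ⟨U * U - #(E₁ ∩ E₂), by lia, ?_⟩
  rw [hE₁, hE₂] at *
  lia

lemma natCast_div_sub_div_eq {X n d r : ℕ} (hn : 0 < n) (hd : 0 < d) (hr : r ≤ X / n) :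
    (((X / n - r) / d : ℕ) : ℝ) = (X / d : ℝ) / n - r / d - 1 / 2 -
      sawtooth ((X / d : ℝ) / n - r / d) := by
  have hn' : (0 : ℝ) < n := by exact_mod_cast hn
  have hd' : (0 : ℝ) < d := by exact_mod_cast hd
  have hq : ⌊(X / d : ℝ) / n - r / d⌋ = (((X / n - r) / d : ℕ) : ℤ) := by
    rw [Int.floor_eq_iff]
    set q := (X / n - r) / d with hq
    have h1 := (le_div_sub_div_iff hn hd hr).1 (le_refl q)
    have h2 := mt (le_div_sub_div_iff (k := q + 1) hn hd hr).2 (by lia)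
    rw [not_le] at h2
    have h1' : (n : ℝ) * (d * q + r) ≤ X := by exact_mod_cast h1
    have h2' : (X : ℝ) < n * (d * (q + 1) + r) := by exact_mod_cast h2
    have e : (X / d : ℝ) / n - r / d = (X - n * r) / (n * d) := by field_simp
    rw [e, Int.cast_natCast]
    constructor
    · rw [le_div_iff₀ (by positivity)]; nlinarith
    · rw [div_lt_iff₀ (by positivity)]; nlinarith
  rw [sawtooth, Int.fract, hq, Int.cast_natCast]
  ring

lemma natCast_div_mul_add_eq {X k d r : ℕ} (hd : 0 < d) :
    ((X / (d * k + r) : ℕ) : ℝ) = (X / d : ℝ) / (k + r / d) - 1 / 2 -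
      sawtooth ((X / d : ℝ) / (k + r / d)) := by
  have hd' : (0 : ℝ) < d := by exact_mod_cast hd
  have e : (X / d : ℝ) / (k + r / d) = (X : ℝ) / ((d * k + r : ℕ) : ℝ) := by
    push_cast
    field_simp
  have hq : ⌊(X / d : ℝ) / (k + r / d)⌋ = ((X / (d * k + r) : ℕ) : ℤ) := by
    rw [e, ← Int.natCast_floor_eq_floor (by positivity), Nat.floor_div_eq_div]
  rw [sawtooth, Int.fract, hq, Int.cast_natCast]
  ring

lemma sum_ite_dvd_div_eq (X d : ℕ) :
    (∑ n ∈ Ico 1 (X + 1), if d ∣ X / n then (1 : ℝ) else 0) =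
      (∑ n ∈ Ico 1 (X + 1), (X / n - 0) / d : ℕ) - (∑ n ∈ Ico 1 (X + 1), (X / n - 1) / d : ℕ) := by
  push_cast
  rw [← sum_sub_distrib]
  refine sum_congr rfl fun n hn => ?_
  rw [mem_Ico] at hn
  have h : 1 ≤ X / n := (Nat.one_le_div_iff (by lia)).2 (by lia)
  obtain ⟨m, hm⟩ := Nat.exists_eq_add_of_le' h
  rw [hm, Nat.sub_zero, Nat.add_sub_cancel, Nat.succ_div]
  split_ifs <;> simp

/-- The number of `n ≤ X` with `d ∣ ⌊X/n⌋`, through the hyperbola method. -/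
lemma abs_count_dvd_sub_le {X d U : ℕ} {Y : ℝ} (hd : 0 < d) (hU : d * (U * U) ≤ X)
    (hU' : X < d * ((U + 1) * (U + 1))) (hY : 0 < Y) (hY3 : Y ^ 3 = (X : ℝ) / d) :
    |(∑ n ∈ Ico 1 (X + 1), if d ∣ X / n then (1 : ℝ) else 0) -
      (U / d + ∑ k ∈ Ico 1 (U + 1), ((X / d : ℝ) / k - (X / d : ℝ) / (k + 1 / d)))| ≤
      3200 * Y * (1 + Real.log X) + 1 := by
  have hd' : (0 : ℝ) < d := by exact_mod_cast hd
  have hd1 : (1 : ℝ) ≤ d := by exact_mod_cast hd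
  have hUX : U ≤ X := by nlinarith
  have hUy : (U : ℝ) ^ 2 ≤ X / d := by
    rw [le_div_iff₀ hd']
    have : ((d * (U * U) : ℕ) : ℝ) ≤ X := by exact_mod_cast hU
    push_cast at this
    linarith
  have hreal : ∀ r ≤ 1, ∃ θ : ℝ, 0 ≤ θ ∧ θ ≤ 1 ∧
      ((∑ n ∈ Ico 1 (X + 1), (X / n - r) / d : ℕ) : ℝ) + U * U =
      (∑ n ∈ Ico 1 (U + 1), ((X / d : ℝ) / n - r / d - 1 / 2)) -
        (∑ n ∈ Ico 1 (U + 1), sawtooth ((X / d : ℝ) / n - r / d)) +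
      ((∑ k ∈ Ico 1 (U + 1), ((X / d : ℝ) / (k + r / d) - 1 / 2)) -
        ∑ k ∈ Ico 1 (U + 1), sawtooth ((X / d : ℝ) / (k + r / d))) + θ := by
    intro r hr
    obtain ⟨θ, hθ, h⟩ := hyperbola_method hd hr hU hU'
    refine ⟨θ, by positivity, by exact_mod_cast hθ, ?_⟩
    have h' := congrArg (Nat.cast (R := ℝ)) h
    rw [Nat.cast_add, Nat.cast_mul, Nat.cast_add, Nat.cast_add] at h'
    rw [h', ← sum_sub_distrib, ← sum_sub_distrib, Nat.cast_sum (Ico 1 (U + 1)),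
      Nat.cast_sum (Ico 1 (U + 1))]
    congr 2
    · refine sum_congr rfl fun n hn => ?_
      rw [mem_Ico] at hn
      exact natCast_div_sub_div_eq (by lia) hd
        (hr.trans ((Nat.one_le_div_iff (by lia)).2 (by lia)))
    · exact sum_congr rfl fun k _ => natCast_div_mul_add_eq hd
  obtain ⟨θ₀, h01, h02, h0⟩ := hreal 0 (by lia)
  obtain ⟨θ₁, h11, h12, h1⟩ := hreal 1 le_rfl
  have hinv : 1 / (d : ℝ) ≤ 1 := by rw [div_le_one hd']; exact hd1
  have s1 := abs_sum_sawtooth_hyperbola_le (a := 0) (b := 0) hY hY3 le_rfl zero_le_one hUy hUX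
  have s2 := abs_sum_sawtooth_hyperbola_le (a := 0) (b := -(1 / d)) hY hY3 le_rfl zero_le_one
    hUy hUX
  have s3 := abs_sum_sawtooth_hyperbola_le (a := 1 / d) (b := 0) hY hY3 (by positivity) hinv
    hUy hUX
  simp only [add_zero, ← sub_eq_add_neg] at s1 s2 s3
  rw [sum_ite_dvd_div_eq]
  simp only [Nat.cast_zero, zero_div, sub_zero, add_zero, Nat.cast_one, sum_sub_distrib,
    sum_const, Nat.card_Ico, Nat.add_sub_cancel, nsmul_eq_mul] at h0 h1 ⊢
  rw [abs_le] at s1 s2 s3 ⊢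
  have e : (U : ℝ) * (1 / d) = U / d := by ring
  rw [e] at h1
  constructor <;> linarith [s1.1, s1.2, s2.1, s2.2, s3.1, s3.2]

lemma reciprocal_term_bounds {d k : ℕ} (hd : 0 < d) (hk : 0 < k) :
    1 / (d : ℝ) ^ 2 * (1 / k - 1 / (k + 1)) ≤ 1 / ((d * k : ℝ) * (d * k + 1)) ∧
      1 / ((d * k : ℝ) * (d * k + 1)) ≤ 1 / (d : ℝ) ^ 2 * (1 / (k : ℝ) ^ 2) := by
  have hd' : (1 : ℝ) ≤ d := by exact_mod_cast hd
  have hk' : (1 : ℝ) ≤ k := by exact_mod_cast hk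
  constructor
  · have e : 1 / (d : ℝ) ^ 2 * (1 / k - 1 / (k + 1)) = 1 / ((d * k : ℝ) * (d * k + d)) := by
      field_simp
      ring
    rw [e]
    gcongr
  · have e : 1 / (d : ℝ) ^ 2 * (1 / (k : ℝ) ^ 2) = 1 / ((d * k : ℝ) * (d * k)) := by
      field_simp
    rw [e]
    gcongr
    linarith

lemma summable_reciprocal_term (d : ℕ) :
    Summable fun k : ℕ => 1 / ((d * k : ℝ) * (d * k + 1)) := by
  rcases Nat.eq_zero_or_pos d with rfl | hd
  · simp
  refine Summable.of_nonneg_of_le (fun k => by positivity) (fun k => ?_)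
    ((Real.summable_one_div_nat_pow.2 one_lt_two).mul_left (1 / (d : ℝ) ^ 2))
  rcases Nat.eq_zero_or_pos k with rfl | hk
  · simp
  · exact (reciprocal_term_bounds hd hk).2

lemma tsum_reciprocal_term_le {d U : ℕ} (hd : 0 < d) (hU : 0 < U) :
    ∑' k : ℕ, 1 / ((d * k : ℝ) * (d * k + 1)) ≤
      ∑ k ∈ range (U + 1), 1 / ((d * k : ℝ) * (d * k + 1)) + 1 / (d : ℝ) ^ 2 * (1 / U) := by
  have hpart : ∀ M, U ≤ M → ∑ k ∈ range (M + 1), 1 / ((d * k : ℝ) * (d * k + 1)) ≤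
      ∑ k ∈ range (U + 1), 1 / ((d * k : ℝ) * (d * k + 1)) +
        1 / (d : ℝ) ^ 2 * (1 / U - 1 / M) := by
    intro M hM
    induction M, hM using Nat.le_induction with
    | base => simp
    | succ M hM ih =>
      rw [sum_range_succ]
      have h1 := (reciprocal_term_bounds (k := M + 1) hd (by lia)).2
      have hM0 : (0 : ℝ) < M := by exact_mod_cast (by lia : 0 < M)
      have h2 : 1 / ((M + 1 : ℕ) : ℝ) ^ 2 ≤ 1 / M - 1 / ((M + 1 : ℕ) : ℝ) := by
        push_cast
        have e : 1 / (M : ℝ) - 1 / (M + 1) = 1 / (M * (M + 1)) := by field_simp; ring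
        rw [e]
        gcongr
        nlinarith
      have h3 := mul_le_mul_of_nonneg_left h2 (by positivity : 0 ≤ 1 / (d : ℝ) ^ 2)
      linarith
  refine (summable_reciprocal_term d).tsum_le_of_sum_range_le fun M => ?_
  have hmono : ∑ k ∈ range M, 1 / ((d * k : ℝ) * (d * k + 1)) ≤
      ∑ k ∈ range (M + U + 1), 1 / ((d * k : ℝ) * (d * k + 1)) :=
    sum_le_sum_of_subset_of_nonneg (range_mono (by lia)) fun k _ _ => by positivity
  refine hmono.trans ((hpart (M + U) (by lia)).trans ?_)
  gcongr
  have : (0 : ℝ) ≤ 1 / ((M + U : ℕ) : ℝ) := by positivity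
  linarith

lemma tsum_reciprocal_term_le_two_div_sq {d : ℕ} (hd : 0 < d) :
    ∑' k : ℕ, 1 / ((d * k : ℝ) * (d * k + 1)) ≤ 2 / (d : ℝ) ^ 2 := by
  have hc := tsum_reciprocal_term_le hd one_pos
  have h1 := (reciprocal_term_bounds hd one_pos).2
  simp only [sum_range_succ, sum_range_one, Nat.cast_zero, mul_zero, zero_mul,
    div_zero, zero_add, Nat.cast_one] at hc h1
  have : 2 / (d : ℝ) ^ 2 = 1 / (d : ℝ) ^ 2 * (1 / 1 ^ 2) + 1 / (d : ℝ) ^ 2 * (1 / 1) := by ring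
  rw [this]
  linarith

lemma sum_ite_dvd_div_eq_zero {X d : ℕ} (hXd : X < d) :
    (∑ n ∈ Ico 1 (X + 1), if d ∣ X / n then (1 : ℝ) else 0) = 0 := by
  refine sum_eq_zero fun n hn => if_neg fun hdvd => ?_
  rw [mem_Ico] at hn
  have h1 : 1 ≤ X / n := (Nat.one_le_div_iff (by lia)).2 (by lia)
  have h2 := Nat.le_of_dvd h1 hdvd
  have h3 := Nat.div_le_self X n
  lia

lemma le_tsum_reciprocal_term {d U X : ℕ} (hd : 0 < d) (hX : 0 < X) :
    ∑ k ∈ range (U + 1), 1 / ((d * k : ℝ) * (d * k + 1)) +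
      1 / (d : ℝ) ^ 2 * (1 / (U + 1) - 1 / X) ≤ ∑' k : ℕ, 1 / ((d * k : ℝ) * (d * k + 1)) := by
  have hpart : ∀ M, U ≤ M → ∑ k ∈ range (U + 1), 1 / ((d * k : ℝ) * (d * k + 1)) +
        1 / (d : ℝ) ^ 2 * (1 / (U + 1) - 1 / (M + 1)) ≤
      ∑ k ∈ range (M + 1), 1 / ((d * k : ℝ) * (d * k + 1)) := by
    intro M hM
    induction M, hM using Nat.le_induction with
    | base => simp
    | succ M hM ih =>
      rw [sum_range_succ _ (M + 1)]
      have h1 := (reciprocal_term_bounds (k := M + 1) hd (by lia)).1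
      push_cast at h1 ⊢
      linarith
  refine le_trans ?_ ((hpart (U + X) (by lia)).trans
    ((summable_reciprocal_term d).sum_le_tsum _ fun k _ => by positivity))
  have hX' : (0 : ℝ) < X := by exact_mod_cast hX
  gcongr
  push_cast
  linarith [(Nat.cast_nonneg U : (0 : ℝ) ≤ U)]

/-- The number of `n ≤ X` with `d ∣ ⌊X/n⌋` is `X ∑ 1/(dk(dk+1))` up to `O((X/d)^(1/3) log X)`. -/
lemma abs_count_dvd_sub_tsum_le {X d : ℕ} {Y : ℝ} (hX : 0 < X) (hd : 0 < d) (hY : 0 < Y)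
    (hY3 : Y ^ 3 = (X : ℝ) / d) :
    |(∑ n ∈ Ico 1 (X + 1), if d ∣ X / n then (1 : ℝ) else 0) -
      X * ∑' k : ℕ, 1 / ((d * k : ℝ) * (d * k + 1))| ≤ 3204 * Y * (1 + Real.log X) := by
  have hd' : (0 : ℝ) < d := by exact_mod_cast hd
  have hd1 : (1 : ℝ) ≤ d := by exact_mod_cast hd
  have hX' : (0 : ℝ) < X := by exact_mod_cast hX
  have hlog : 0 ≤ Real.log X := Real.log_natCast_nonneg X
  rcases Nat.lt_or_ge X d with hXd | hXd
  · have hzero := sum_ite_dvd_div_eq_zero hXd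
    have hc0 : 0 ≤ ∑' k : ℕ, 1 / ((d * k : ℝ) * (d * k + 1)) := tsum_nonneg fun k => by positivity
    have hc2 := tsum_reciprocal_term_le_two_div_sq hd
    rw [hzero, zero_sub, abs_neg, abs_of_nonneg (by positivity)]
    have hy1 : (X : ℝ) / d ≤ 1 := by
      rw [div_le_one hd']; exact_mod_cast hXd.le
    have hY1 : Y ≤ 1 := by
      by_contra! h
      have : 1 < Y ^ 3 := one_lt_pow₀ h (by norm_num)
      linarith
    have hyY : (X : ℝ) / d ≤ Y := by
      rw [← hY3]
      exact pow_le_of_le_one hY.le hY1 (by norm_num)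
    calc X * ∑' k : ℕ, 1 / ((d * k : ℝ) * (d * k + 1)) ≤ X * (2 / (d : ℝ) ^ 2) := by gcongr
      _ = 2 * (X / d) * (1 / d) := by ring
      _ ≤ 2 * (X / d) * 1 := by
        gcongr
        rwa [div_le_one hd']
      _ ≤ 3204 * Y * (1 + Real.log X) := by nlinarith [mul_nonneg hY.le hlog]
  · set U := Nat.sqrt (X / d) with hUdef
    have hU : d * (U * U) ≤ X :=
      (Nat.mul_le_mul_left d (Nat.sqrt_le (X / d))).trans (Nat.mul_div_le X d)
    have hU' : X < d * ((U + 1) * (U + 1)) := by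
      have := Nat.lt_succ_sqrt (X / d)
      rw [mul_comm]
      exact (Nat.div_lt_iff_lt_mul hd).1 this
    have hUpos : 0 < U := Nat.sqrt_pos.2 (Nat.div_pos hXd hd)
    have hU1 : (1 : ℝ) ≤ U := by exact_mod_cast hUpos
    have hcount := abs_count_dvd_sub_le hd hU hU' hY hY3
    have hUy : (U : ℝ) * U ≤ X / d := by
      rw [le_div_iff₀ hd']
      have : ((d * (U * U) : ℕ) : ℝ) ≤ X := by exact_mod_cast hU
      push_cast at this
      linarith
    have hUy' : (X : ℝ) / d ≤ (U + 1) * (U + 1) := by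
      rw [div_le_iff₀ hd']
      have : (X : ℝ) ≤ ((d * ((U + 1) * (U + 1)) : ℕ) : ℝ) := by exact_mod_cast hU'.le
      push_cast at this
      linarith
    have hsum : ∑ k ∈ Ico 1 (U + 1), ((X / d : ℝ) / k - (X / d : ℝ) / (k + 1 / d)) =
        X * ∑ k ∈ range (U + 1), 1 / ((d * k : ℝ) * (d * k + 1)) := by
      rw [range_eq_Ico, sum_eq_sum_Ico_succ_bot (by lia : 0 < U + 1)]
      simp only [Nat.cast_zero, mul_zero, zero_mul, div_zero, zero_add]
      rw [mul_sum]
      refine sum_congr rfl fun k hk => ?_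
      rw [mem_Ico] at hk
      have hk' : (0 : ℝ) < k := by exact_mod_cast hk.1
      field_simp
      ring
    rw [hsum] at hcount
    have hup := mul_le_mul_of_nonneg_left (tsum_reciprocal_term_le hd hUpos) hX'.le
    have hlo := mul_le_mul_of_nonneg_left (le_tsum_reciprocal_term (U := U) hd hX) hX'.le
    set P := ∑ k ∈ range (U + 1), 1 / ((d * k : ℝ) * (d * k + 1))
    set c := ∑' k : ℕ, 1 / ((d * k : ℝ) * (d * k + 1))
    have hup' : (X : ℝ) * (1 / (d : ℝ) ^ 2 * (1 / U)) ≤ U / d + 3 := by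
      have e : (X : ℝ) * (1 / (d : ℝ) ^ 2 * (1 / U)) = (X / d) / U / d := by field_simp
      have h1 : (X / d : ℝ) / U ≤ U + 3 := by
        rw [div_le_iff₀ (by linarith)]
        nlinarith
      rw [e]
      calc (X / d : ℝ) / U / d ≤ (U + 3) / d := by gcongr
        _ = U / d + 3 / d := by ring
        _ ≤ U / d + 3 := by
          gcongr
          exact div_le_self (by norm_num) hd1
    have hlo' : U / d - 2 ≤ (X : ℝ) * (1 / (d : ℝ) ^ 2 * (1 / (U + 1) - 1 / X)) := by
      have e : (X : ℝ) * (1 / (d : ℝ) ^ 2 * (1 / (U + 1) - 1 / X)) =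
          ((X / d) / (U + 1) - 1 / d) / d := by field_simp
      have h1 : (U : ℝ) - 1 ≤ (X / d : ℝ) / (U + 1) := by
        rw [le_div_iff₀ (by linarith)]
        nlinarith
      have h2 : 1 / (d : ℝ) ≤ 1 := by rwa [div_le_one hd']
      rw [e]
      calc (U / d - 2 : ℝ) ≤ U / d - 2 / d := by
            gcongr
            exact div_le_self (by norm_num) hd1
        _ = (U - 1 - 1) / d := by ring
        _ ≤ _ := by gcongr
    have hY1 : 1 ≤ Y := by
      by_contra! h
      have h1 : Y ^ 3 < 1 := pow_lt_one₀ hY.le h (by norm_num)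
      have h2 : (1 : ℝ) ≤ X / d := by
        rw [one_le_div hd']; exact_mod_cast hXd
      linarith
    have hYl : 1 ≤ Y * (1 + Real.log X) := by nlinarith
    rw [mul_add] at hup hlo
    rw [abs_le] at hcount ⊢
    constructor <;> linarith [hcount.1, hcount.2]

lemma conv_id_div_self {f g : ℕ → ℝ}
    (hf : ∀ n : ℕ, 1 ≤ n → f n = ∑ d ∈ n.divisors, (d : ℝ) * g (n / d)) {m : ℕ} (hm : 1 ≤ m) :
    f m / m = ∑ d ∈ m.divisors, g d / d := by
  rw [hf m hm, sum_div, ← Nat.sum_div_divisors m fun d => g d / d]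
  refine sum_congr rfl fun d hd => ?_
  have hdvd := Nat.dvd_of_mem_divisors hd
  have hd0 : (d : ℝ) ≠ 0 := by exact_mod_cast (Nat.pos_of_mem_divisors hd).ne'
  have hm0 : (m : ℝ) ≠ 0 := by exact_mod_cast (by lia : m ≠ 0)
  rw [Nat.cast_div hdvd hd0]
  field_simp

/-- Grouping `∑ f(m)/(m²(m+1))` according to the divisor at which `g` is evaluated. -/
lemma hasSum_conv_id_div {f g : ℕ → ℝ} {C : ℝ}
    (hf : ∀ n : ℕ, 1 ≤ n → f n = ∑ d ∈ n.divisors, (d : ℝ) * g (n / d))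
    (hg : ∀ n : ℕ, 1 ≤ n → |g n| ≤ C) :
    HasSum (fun d : ℕ => g d / d * ∑' k : ℕ, 1 / ((d * k : ℝ) * (d * k + 1)))
      (∑' m : ℕ, f m / (m ^ 2 * (m + 1))) := by
  have hC : 0 ≤ C := (abs_nonneg _).trans (hg 1 le_rfl)
  set G : ℕ × ℕ → ℝ := fun p => g p.1 / p.1 * (1 / ((p.1 * p.2 : ℝ) * (p.1 * p.2 + 1))) with hG
  have hsq : Summable fun n : ℕ => 1 / (n : ℝ) ^ 2 := Real.summable_one_div_nat_pow.2 one_lt_two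
  have hsum : Summable G := by
    refine Summable.of_norm_bounded ((hsq.mul_of_nonneg hsq (fun n => by positivity)
      (fun n => by positivity)).mul_left C) ?_
    rintro ⟨d, k⟩
    rcases Nat.eq_zero_or_pos d with rfl | hd
    · simp [hG]
    rcases Nat.eq_zero_or_pos k with rfl | hk
    · simp [hG]
    have hd1 : (1 : ℝ) ≤ d := by exact_mod_cast hd
    simp only [hG]
    rw [norm_mul, Real.norm_eq_abs, Real.norm_eq_abs, abs_div, Nat.abs_cast,
      abs_of_nonneg (by positivity : 0 ≤ 1 / ((d * k : ℝ) * (d * k + 1)))]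
    exact mul_le_mul ((div_le_self (abs_nonneg _) hd1).trans (hg d hd))
      (reciprocal_term_bounds hd hk).2 (by positivity) hC
  have hfib := hsum.hasSum.tsum_fiberwise fun p : ℕ × ℕ => p.1 * p.2
  have hfun : (fun m : ℕ => ∑' b : (fun p : ℕ × ℕ => p.1 * p.2) ⁻¹' {m}, G b) =
      fun m : ℕ => f m / (m ^ 2 * (m + 1)) := by
    funext m
    rcases Nat.eq_zero_or_pos m with rfl | hm
    · have : ∀ b : (fun p : ℕ × ℕ => p.1 * p.2) ⁻¹' {0}, G b = 0 := by
        rintro ⟨⟨d, k⟩, h⟩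
        rcases Nat.mul_eq_zero.1 h with h | h
        · simp [hG, show d = 0 from h]
        · simp [hG, show k = 0 from h]
      simp [this]
    · have hset : (fun p : ℕ × ℕ => p.1 * p.2) ⁻¹' {m} = (m.divisorsAntidiagonal : Set (ℕ × ℕ)) := by
        ext p
        simp [hm.ne']
      have hm0 : (0 : ℝ) < m := by exact_mod_cast hm
      have e : f m / ((m : ℝ) ^ 2 * (m + 1)) = f m / m * (1 / ((m : ℝ) * (m + 1))) := by
        field_simp
      rw [hset, Finset.tsum_subtype' m.divisorsAntidiagonal G, e, conv_id_div_self hf hm, sum_mul,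
        ← Nat.sum_divisorsAntidiagonal
          fun d _ : ℕ => g d / (d : ℝ) * (1 / ((m : ℝ) * (m + 1)))]
      refine sum_congr rfl fun p hp => ?_
      have hp' : (p.1 : ℝ) * p.2 = m := by exact_mod_cast (Nat.mem_divisorsAntidiagonal.1 hp).1
      simp only [hG, hp']
  rw [hfun] at hfib
  rw [hfib.tsum_eq]
  have h := hsum.hasSum.prod_fiberwise fun d => (hsum.prod_factor d).hasSum
  simpa only [hG, tsum_mul_left] using h

lemma hasSum_count_dvd_mul {f g : ℕ → ℝ}
    (hf : ∀ n : ℕ, 1 ≤ n → f n = ∑ d ∈ n.divisors, (d : ℝ) * g (n / d)) (X : ℕ) :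
    HasSum (fun d : ℕ => g d / d * ∑ n ∈ Ico 1 (X + 1), if d ∣ X / n then (1 : ℝ) else 0)
      (∑ n ∈ Ico 1 (X + 1), f (X / n) / (X / n : ℕ)) := by
  have h : ∑ n ∈ Ico 1 (X + 1), f (X / n) / (X / n : ℕ) = ∑ d ∈ Ico 1 (X + 1),
      g d / d * ∑ n ∈ Ico 1 (X + 1), if d ∣ X / n then (1 : ℝ) else 0 := by
    simp_rw [mul_sum]
    rw [sum_comm]
    refine sum_congr rfl fun n hn => ?_
    rw [mem_Ico] at hn
    have h1 : 1 ≤ X / n := (Nat.one_le_div_iff (by lia)).2 (by lia)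
    simp_rw [mul_ite, mul_one, mul_zero]
    rw [conv_id_div_self hf h1, ← sum_filter]
    refine sum_congr ?_ fun _ _ => rfl
    ext d
    rw [Nat.mem_divisors, mem_filter, mem_Ico]
    constructor
    · rintro ⟨h2, -⟩
      have h3 := Nat.le_of_dvd h1 h2
      have h4 := Nat.div_le_self X n
      exact ⟨⟨Nat.pos_of_dvd_of_pos h2 h1, by lia⟩, h2⟩
    · rintro ⟨-, h2⟩
      exact ⟨h2, by lia⟩
  rw [h]
  refine hasSum_sum_of_ne_finset_zero fun d hd => ?_
  rw [mem_Ico, not_and_or] at hd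
  rcases hd with hd | hd
  · have : d = 0 := by lia
    simp [this]
  · rw [sum_ite_dvd_div_eq_zero (by lia), mul_zero]

lemma abs_sum_conv_id_div_sub_le {f g : ℕ → ℝ} {C : ℝ}
    (hf : ∀ n : ℕ, 1 ≤ n → f n = ∑ d ∈ n.divisors, (d : ℝ) * g (n / d))
    (hg : ∀ n : ℕ, 1 ≤ n → |g n| ≤ C) {X : ℕ} (hX : 0 < X) :
    |∑ n ∈ Ico 1 (X + 1), f (X / n) / (X / n : ℕ) - X * ∑' m : ℕ, f m / (m ^ 2 * (m + 1))| ≤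
      3204 * C * (∑' d : ℕ, 1 / (d : ℝ) ^ (4 / 3 : ℝ)) *
        ((X : ℝ) ^ (1 / 3 : ℝ) * (1 + Real.log X)) := by
  have hC : 0 ≤ C := (abs_nonneg _).trans (hg 1 le_rfl)
  have hX' : (0 : ℝ) < X := by exact_mod_cast hX
  have hlog : 0 ≤ Real.log X := Real.log_natCast_nonneg X
  have hs := (hasSum_count_dvd_mul hf X).sub ((hasSum_conv_id_div hf hg).mul_left (X : ℝ))
  have hz : Summable fun d : ℕ => 1 / (d : ℝ) ^ (4 / 3 : ℝ) :=
    Real.summable_one_div_nat_rpow.2 (by norm_num)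
  rw [← hs.tsum_eq, ← Real.norm_eq_abs]
  have hb := hz.hasSum.mul_left (3204 * C * ((X : ℝ) ^ (1 / 3 : ℝ) * (1 + Real.log X)))
  refine (tsum_of_norm_bounded hb fun d => ?_).trans (le_of_eq (by ring))
  rcases Nat.eq_zero_or_pos d with rfl | hd
  · simp
  have hd' : (0 : ℝ) < d := by exact_mod_cast hd
  set Y : ℝ := ((X : ℝ) / d) ^ (1 / 3 : ℝ) with hYdef
  have hY : 0 < Y := by positivity
  have hY3 : Y ^ 3 = (X : ℝ) / d := by
    rw [hYdef, ← Real.rpow_natCast, ← Real.rpow_mul (by positivity)]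
    norm_num
  have hcount := abs_count_dvd_sub_tsum_le hX hd hY hY3
  have e1 : ∀ A B : ℝ, g d / d * A - X * (g d / d * B) = g d / d * (A - X * B) := by
    intro A B; ring
  rw [e1, norm_mul, Real.norm_eq_abs, Real.norm_eq_abs, abs_div, Nat.abs_cast]
  have e2 : Y / d = (X : ℝ) ^ (1 / 3 : ℝ) * (1 / (d : ℝ) ^ (4 / 3 : ℝ)) := by
    have : (d : ℝ) ^ (4 / 3 : ℝ) = (d : ℝ) ^ (1 / 3 : ℝ) * d := by
      nth_rewrite 3 [← Real.rpow_one (d : ℝ)]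
      rw [← Real.rpow_add hd']
      norm_num
    rw [hYdef, Real.div_rpow hX'.le hd'.le, this]
    field_simp
  calc |g d| / d * |(∑ n ∈ Ico 1 (X + 1), if d ∣ X / n then (1 : ℝ) else 0) -
        X * ∑' k : ℕ, 1 / ((d * k : ℝ) * (d * k + 1))|
      ≤ C / d * (3204 * Y * (1 + Real.log X)) := by
        gcongr
        exact hg d hd
    _ = 3204 * C * (1 + Real.log X) * (Y / d) := by ring
    _ = _ := by rw [e2]; ring

/-- If `f = id ∗ g` with `g(n) = O(1)`, then
`∑_{n ≤ x} f(⌊x/n⌋)/⌊x/n⌋ = x ∑_{m ≥ 1} f(m)/(m²(m+1)) + O(x^{1/3} log x)`. -/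
theorem sum_f_floor_div_asymptotic (f g : ℕ → ℝ)
    (hf : ∀ n : ℕ, 1 ≤ n → f n = ∑ d ∈ n.divisors, (d : ℝ) * g (n / d))
    (hg : ∃ C : ℝ, ∀ n : ℕ, 1 ≤ n → |g n| ≤ C) :
    (fun x : ℝ =>
        (∑ n ∈ Finset.Icc 1 ⌊x⌋₊, f ⌊x / (n : ℝ)⌋₊ / (⌊x / (n : ℝ)⌋₊ : ℝ)) -
        x * ∑' m : ℕ, f m / (m ^ 2 * (m + 1)))
    =O[atTop] fun x : ℝ => x ^ ((1 : ℝ) / 3) * Real.log x := by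
  obtain ⟨C, hC⟩ := hg
  have hC0 : 0 ≤ C := (abs_nonneg _).trans (hC 1 le_rfl)
  set T := ∑' m : ℕ, f m / (m ^ 2 * (m + 1)) with hT
  set M := 3204 * C * ∑' d : ℕ, 1 / (d : ℝ) ^ (4 / 3 : ℝ) with hM
  have hM0 : 0 ≤ M := mul_nonneg (by positivity) (tsum_nonneg fun d => by positivity)
  refine Asymptotics.IsBigO.of_bound (2 * M + |T|) ?_
  filter_upwards [eventually_ge_atTop (Real.exp 1)] with x hx
  have hx1 : 1 ≤ x := (Real.one_le_exp zero_le_one).trans hx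
  have hx0 : 0 < x := by linarith
  have hlog : 1 ≤ Real.log x := by rwa [Real.le_log_iff_exp_le hx0]
  have hX : 0 < ⌊x⌋₊ := Nat.floor_pos.2 hx1
  have hX' : (0 : ℝ) < ⌊x⌋₊ := by exact_mod_cast hX
  have hXx : (⌊x⌋₊ : ℝ) ≤ x := Nat.floor_le hx0.le
  have hxX : x < ⌊x⌋₊ + 1 := Nat.lt_floor_add_one x
  have hmain := abs_sum_conv_id_div_sub_le hf hC hX
  have hpow : (1 : ℝ) ≤ x ^ ((1 : ℝ) / 3) := Real.one_le_rpow hx1 (by norm_num)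
  rw [Real.norm_eq_abs, Real.norm_eq_abs,
    abs_of_nonneg (by positivity : 0 ≤ x ^ ((1 : ℝ) / 3) * Real.log x)]
  simp_rw [Nat.floor_div_natCast]
  have hIcc : Icc 1 ⌊x⌋₊ = Ico 1 (⌊x⌋₊ + 1) := rfl
  rw [hIcc]
  have hmain' : M * ((⌊x⌋₊ : ℝ) ^ (1 / 3 : ℝ) * (1 + Real.log ⌊x⌋₊)) ≤
      M * (x ^ ((1 : ℝ) / 3) * (2 * Real.log x)) := by
    have h1 : Real.log ⌊x⌋₊ ≤ Real.log x := Real.log_le_log hX' hXx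
    have h2 : 0 ≤ Real.log (⌊x⌋₊ : ℝ) := Real.log_natCast_nonneg _
    gcongr
    linarith
  have hfrac : |(⌊x⌋₊ : ℝ) * T - x * T| ≤ |T| := by
    rw [← sub_mul, abs_mul]
    refine mul_le_of_le_one_left (abs_nonneg _) ?_
    rw [abs_le]
    constructor <;> linarith
  have hT' : |T| ≤ |T| * (x ^ ((1 : ℝ) / 3) * Real.log x) :=
    le_mul_of_one_le_right (abs_nonneg _) (one_le_mul_of_one_le_of_one_le hpow hlog)
  calc _ ≤ |∑ n ∈ Ico 1 (⌊x⌋₊ + 1), f (⌊x⌋₊ / n) / ((⌊x⌋₊ / n : ℕ) : ℝ) - ⌊x⌋₊ * T| +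
        |(⌊x⌋₊ : ℝ) * T - x * T| := abs_sub_le _ _ _
    _ ≤ M * (x ^ ((1 : ℝ) / 3) * (2 * Real.log x)) +
        |T| * (x ^ ((1 : ℝ) / 3) * Real.log x) :=
        add_le_add (hmain.trans hmain') (hfrac.trans hT')
    _ = _ := by ring
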